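/- Let α ∈ (0,1), β > 0, and λ > 0 with 2√λ cos(√λ) + (β − λ/β) sin(√λ) = 0. Define ψ(x) = sin(√λ x) + (√λ/β) cos(√λ x) and u(x,t) = ψ(x) E_α(−λ t^α) for x ∈ ℝ and t ≥ 0. Then u is a classical solution of the one-dimensional fractional diffusion equation with Robin conditions of parameter β on [0,1]: for every x ∈ [0,1] and t > 0, (1/Γ(1−α)) ∫_0^t (t−s)^(−α) ∂_s u(x,s) ds = ∂²_x u(x,t); moreover −∂_x u(0,t) + β u(0,t) = 0 and ∂_x u(1,t) + β u(1,t) = 0 for all t > 0, and u(x,0) = ψ(x) for all x ∈ [0,1]. -/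

import Mathlib

/-- The Mittag-Leffler function `E_α(x) = ∑_{k=0}^∞ x^k / Γ(αk + 1)`. -/
noncomputable def mittagLeffler (α x : ℝ) : ℝ :=
  ∑' k : ℕ, x ^ k / Real.Gamma (α * k + 1)

/-!
Separation of variables: `u` is the product of a spatial factor `ψ` with `ψ'' = -λ ψ` and a temporal
factor `E_α(-λ t ^ α)` whose Caputo derivative is `-λ` times itself. The Robin condition at `0` is
built into `ψ`, and at `1` it is the characteristic equation for `√λ`.

For the temporal factor, differentiating the series gives
`d/ds E_α(c s ^ α) = ∑ c ^ (k + 1) s ^ (α (k + 1) - 1) / Γ(α (k + 1))`, and Euler's Beta integral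
evaluates each term against the kernel `(t - s) ^ (-α)`:
`∫₀ᵗ (t - s) ^ (-α) s ^ (α (k + 1) - 1) ds = t ^ (α k) Γ(α (k + 1)) Γ(1 - α) / Γ(α k + 1)`.
The resulting series is `Γ(1 - α) c E_α(c t ^ α)`. Its absolute convergence, which follows from the
superexponential growth of `Γ`, justifies integrating term by term.
-/

open MeasureTheory Set Real

theorem exp_neg_mul_rpow_le_Gamma_add_one {R x : ℝ} (hR : 0 ≤ R) (hx : 0 ≤ x) :
    exp (-R) * R ^ x ≤ Gamma (x + 1) := by
  have hconv : IntegrableOn (fun t ↦ exp (-t) * t ^ x) (Ioi 0) := by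
    simpa using GammaIntegral_convergent (s := x + 1) (by linarith)
  have hsub : Ioi R ⊆ Ioi (0 : ℝ) := Ioi_subset_Ioi hR
  calc exp (-R) * R ^ x = ∫ t in Ioi R, exp (-t) * R ^ x := by
        rw [integral_mul_const, integral_exp_neg_Ioi]
    _ ≤ ∫ t in Ioi R, exp (-t) * t ^ x := by
        refine setIntegral_mono_on ((integrableOn_exp_neg_Ioi R).mul_const _)
          (hconv.mono_set hsub) measurableSet_Ioi fun t ht ↦ ?_
        have : R ≤ t := le_of_lt ht
        gcongr
    _ ≤ ∫ t in Ioi 0, exp (-t) * t ^ x := by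
        refine setIntegral_mono_set hconv ?_ (.of_forall hsub)
        filter_upwards [ae_restrict_mem measurableSet_Ioi] with t ht
        exact mul_nonneg (exp_pos _).le (rpow_nonneg (le_of_lt ht) _)
    _ = Gamma (x + 1) := by
        rw [Gamma_eq_integral (by linarith), add_sub_cancel_right]

theorem integral_sub_rpow_mul_rpow {a b t : ℝ} (ha : 0 < a) (hb : 0 < b) (ht : 0 < t) :
    ∫ s in (0 : ℝ)..t, (t - s) ^ (b - 1) * s ^ (a - 1) =
      t ^ (a + b - 1) * (Gamma a * Gamma b / Gamma (a + b)) := by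
  have hbeta := Complex.betaIntegral_scaled a b ht
  have hcast : ∫ s in (0 : ℝ)..t, (s : ℂ) ^ ((a : ℂ) - 1) * ((t : ℂ) - s) ^ ((b : ℂ) - 1) =
      ((∫ s in (0 : ℝ)..t, (t - s) ^ (b - 1) * s ^ (a - 1) : ℝ) : ℂ) := by
    rw [← intervalIntegral.integral_ofReal]
    refine intervalIntegral.integral_congr fun s hs ↦ ?_
    rw [uIcc_of_le ht.le] at hs
    simp only [Complex.ofReal_mul, Complex.ofReal_cpow hs.1,
      Complex.ofReal_cpow (sub_nonneg.2 hs.2), Complex.ofReal_sub, Complex.ofReal_one, mul_comm]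
  rw [hcast, Complex.betaIntegral_eq_Gamma_mul_div _ _ (by simpa) (by simpa)] at hbeta
  have hpow : (t : ℂ) ^ ((a : ℂ) + b - 1) = ((t ^ (a + b - 1) : ℝ) : ℂ) := by
    simp [Complex.ofReal_cpow ht.le]
  rw [hpow, ← Complex.ofReal_add] at hbeta
  simp only [Complex.Gamma_ofReal] at hbeta
  exact_mod_cast hbeta

theorem integrableOn_sub_rpow_mul_rpow {a b t : ℝ} (ha : 0 < a) (hb : 0 < b) (ht : 0 < t) :
    IntegrableOn (fun s ↦ (t - s) ^ (b - 1) * s ^ (a - 1)) (Ioc 0 t) := by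
  -- The integral of a non-integrable function is `0` by convention, whereas this one is positive.
  refine Integrable.of_integral_ne_zero (ne_of_gt ?_)
  rw [← intervalIntegral.integral_of_le ht.le, integral_sub_rpow_mul_rpow ha hb ht]
  have := Gamma_pos_of_pos ha
  have := Gamma_pos_of_pos hb
  have := Gamma_pos_of_pos (add_pos ha hb)
  positivity

theorem integral_tsum_mul_of_nonneg {X ι : Type*} [MeasurableSpace X] {μ : Measure X} [Countable ι]
    {c : ι → ℝ} {f : ι → X → ℝ} (hf : ∀ i, Integrable (f i) μ) (hf_nonneg : ∀ i, 0 ≤ᵐ[μ] f i)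
    (hsum : Summable fun i ↦ c i * ∫ x, f i x ∂μ) :
    ∫ x, ∑' i, c i * f i x ∂μ = ∑' i, c i * ∫ x, f i x ∂μ := by
  have hnorm (i : ι) : ∫ x, ‖c i * f i x‖ ∂μ = ‖c i * ∫ x, f i x ∂μ‖ := by
    rw [norm_mul, norm_of_nonneg (integral_nonneg_of_ae (hf_nonneg i)), ← integral_const_mul]
    refine integral_congr_ae ?_
    filter_upwards [hf_nonneg i] with x hx
    rw [norm_mul, norm_of_nonneg hx]
  have hswap := integral_tsum_of_summable_integral_norm (F := fun i x ↦ c i * f i x)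
    (fun i ↦ (hf i).const_mul (c i)) (by simpa only [hnorm] using hsum.norm)
  simpa only [integral_const_mul] using hswap.symm

theorem hasDerivAt_tsum_mul_pow {𝕜 : Type*} [RCLike 𝕜] {a : ℕ → 𝕜}
    (ha : ∀ x : 𝕜, Summable fun k ↦ a k * x ^ k) (z : 𝕜) :
    HasDerivAt (fun x ↦ ∑' k, a k * x ^ k) (∑' k : ℕ, (k + 1) * a (k + 1) * z ^ k) z := by
  set R : ℝ := ‖z‖ + 1 with hR
  have hR_one : 1 ≤ R := by simp [hR]
  have hz : z ∈ Metric.ball (0 : 𝕜) R := by simp [hR]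
  have hmajorant : Summable fun k ↦ ‖a k‖ * (2 * R) ^ k := by
    simpa [abs_of_nonneg (zero_le_one.trans hR_one)] using (ha ((2 * R : ℝ) : 𝕜)).norm
  have hbound (k : ℕ) (y : 𝕜) (hy : y ∈ Metric.ball 0 R) :
      ‖a k * (k * y ^ (k - 1))‖ ≤ ‖a k‖ * (2 * R) ^ k := by
    have hk : (k : ℝ) ≤ 2 ^ k := mod_cast Nat.lt_two_pow_self.le
    have hy_pow : ‖y‖ ^ (k - 1) ≤ R ^ k :=
      (pow_le_pow_left₀ (norm_nonneg y) (mem_ball_zero_iff.1 hy).le _).trans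
        (pow_le_pow_right₀ hR_one (Nat.sub_le _ _))
    rw [norm_mul, norm_mul, norm_pow, RCLike.norm_natCast, mul_pow]
    gcongr
  have hderiv := hasDerivAt_tsum_of_isPreconnected hmajorant Metric.isOpen_ball
    (convex_ball (0 : 𝕜) R).isPreconnected
    (fun k y _ ↦ (hasDerivAt_pow k y).const_mul (a k)) hbound hz (ha z) hz
  have hsummable : Summable fun k : ℕ ↦ a k * (k * z ^ (k - 1)) :=
    hmajorant.of_norm_bounded fun k ↦ hbound k z hz
  rw [hsummable.tsum_eq_zero_add] at hderiv
  simpa [mul_assoc, mul_left_comm] using hderiv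

/-- The Caputo fractional derivative of order `α ∈ (0, 1)` with base point `0`. Nothing is required
of `f`: where `f` is not differentiable or the integrand is not integrable, the value is junk. -/
noncomputable def caputoDeriv (α : ℝ) (f : ℝ → ℝ) (t : ℝ) : ℝ :=
  (1 / Gamma (1 - α)) * ∫ s in (0 : ℝ)..t, (t - s) ^ (-α) * deriv f s

theorem caputoDeriv_const_mul (α c : ℝ) (f : ℝ → ℝ) (t : ℝ) :
    caputoDeriv α (fun s ↦ c * f s) t = c * caputoDeriv α f t := by
  simp only [caputoDeriv, deriv_const_mul_field, mul_left_comm _ c,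
    intervalIntegral.integral_const_mul]

section MittagLeffler

variable {α : ℝ}

theorem summable_mittagLeffler (hα : 0 < α) (x : ℝ) :
    Summable fun k : ℕ ↦ x ^ k / Gamma (α * k + 1) := by
  -- With `R ^ α = M > |x|`, the bound `Γ(α k + 1) ≥ e ^ (-R) M ^ k` gives a geometric majorant.
  set M : ℝ := |x| + 1
  have hM_pos : 0 < M := by positivity
  set R : ℝ := M ^ α⁻¹
  have hR_pos : 0 < R := by positivity
  have hgeom : Summable fun k : ℕ ↦ exp R * (|x| / M) ^ k :=
    (summable_geometric_of_lt_one (by positivity)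
      ((div_lt_one hM_pos).2 (lt_add_one _))).mul_left _
  refine hgeom.of_norm_bounded fun k ↦ ?_
  have hGamma : exp (-R) * M ^ k ≤ Gamma (α * k + 1) := by
    have hpow : R ^ (α * k) = M ^ k := by
      rw [rpow_mul hR_pos.le, rpow_inv_rpow hM_pos.le hα.ne', rpow_natCast]
    simpa only [hpow] using
      exp_neg_mul_rpow_le_Gamma_add_one hR_pos.le (show 0 ≤ α * k by positivity)
  have hGamma_pos : 0 < Gamma (α * k + 1) := lt_of_lt_of_le (by positivity) hGamma
  calc ‖x ^ k / Gamma (α * k + 1)‖ = |x| ^ k / Gamma (α * k + 1) := by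
        rw [norm_div, norm_pow, norm_of_nonneg hGamma_pos.le, norm_eq_abs]
    _ ≤ |x| ^ k / (exp (-R) * M ^ k) := by gcongr
    _ = exp R * (|x| / M) ^ k := by rw [exp_neg, div_pow]; field_simp

theorem mittagLeffler_zero (α : ℝ) : mittagLeffler α 0 = 1 := by
  rw [mittagLeffler, tsum_eq_single 0 fun k hk ↦ by simp [hk]]
  simp

theorem hasDerivAt_mittagLeffler (hα : 0 < α) (x : ℝ) :
    HasDerivAt (mittagLeffler α)
      (∑' k : ℕ, (k + 1) * x ^ k / Gamma (α * (k + 1) + 1)) x := by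
  have hseries : mittagLeffler α = fun y ↦ ∑' k : ℕ, (Gamma (α * k + 1))⁻¹ * y ^ k := by
    funext y
    simp only [mittagLeffler, div_eq_inv_mul]
  have hderiv := hasDerivAt_tsum_mul_pow (a := fun k ↦ (Gamma (α * k + 1))⁻¹)
    (fun y ↦ by simpa only [div_eq_inv_mul] using summable_mittagLeffler hα y) x
  rw [hseries]
  convert! hderiv using 3
  push_cast
  ring

theorem hasDerivAt_mittagLeffler_mul_rpow (hα : 0 < α) (c : ℝ) {s : ℝ} (hs : 0 < s) :
    HasDerivAt (fun r ↦ mittagLeffler α (c * r ^ α))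
      (∑' k : ℕ, c ^ (k + 1) / Gamma (α * (k + 1)) * s ^ (α * (k + 1) - 1)) s := by
  have hchain := (hasDerivAt_mittagLeffler hα (c * s ^ α)).comp s
    ((hasDerivAt_rpow_const (p := α) (.inl hs.ne')).const_mul c)
  convert! hchain using 1
  rw [← tsum_mul_right]
  refine tsum_congr fun k ↦ ?_
  have hp : 0 < α * ((k : ℝ) + 1) := by positivity
  have := (Gamma_pos_of_pos hp).ne'
  have hpow : s ^ (α * ((k : ℝ) + 1) - 1) = (s ^ α) ^ k * s ^ (α - 1) := by
    rw [← rpow_natCast (s ^ α), ← rpow_mul hs.le, ← rpow_add hs]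
    congr 1
    ring
  rw [Gamma_add_one hp.ne', hpow]
  field_simp
  ring

theorem caputoDeriv_mittagLeffler_mul_rpow (hα : α ∈ Ioo 0 1) (c : ℝ) {t : ℝ} (ht : 0 < t) :
    caputoDeriv α (fun s ↦ mittagLeffler α (c * s ^ α)) t = c * mittagLeffler α (c * t ^ α) := by
  obtain ⟨hα0, hα1⟩ := hα
  have hα' : 0 < 1 - α := sub_pos.2 hα1
  have hexp (k : ℕ) : 0 < α * ((k : ℝ) + 1) := by positivity
  set a : ℕ → ℝ := fun k ↦ c ^ (k + 1) / Gamma (α * (k + 1)) with ha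
  set f : ℕ → ℝ → ℝ := fun k s ↦ (t - s) ^ (1 - α - 1) * s ^ (α * (k + 1) - 1) with hf
  have hf_nonneg (k : ℕ) : 0 ≤ᵐ[volume.restrict (Ioc 0 t)] f k := by
    filter_upwards [ae_restrict_mem measurableSet_Ioc] with s hs
    exact mul_nonneg (rpow_nonneg (sub_nonneg.2 hs.2) _) (rpow_nonneg hs.1.le _)
  have hterm (k : ℕ) : a k * ∫ s in Ioc 0 t, f k s =
      Gamma (1 - α) * c * ((c * t ^ α) ^ k / Gamma (α * k + 1)) := by
    have := (Gamma_pos_of_pos (hexp k)).ne'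
    rw [← intervalIntegral.integral_of_le ht.le, integral_sub_rpow_mul_rpow (hexp k) hα' ht,
      show α * ((k : ℝ) + 1) + (1 - α) = α * k + 1 by ring, add_sub_cancel_right, rpow_mul ht.le,
      rpow_natCast, ha, mul_pow]
    field_simp
    ring
  have hseries : ∫ s in (0 : ℝ)..t, (t - s) ^ (-α) *
      deriv (fun r ↦ mittagLeffler α (c * r ^ α)) s = ∫ s in Ioc 0 t, ∑' k, a k * f k s := by
    rw [intervalIntegral.integral_of_le ht.le]
    refine setIntegral_congr_fun measurableSet_Ioc fun s hs ↦ ?_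
    simp only [(hasDerivAt_mittagLeffler_mul_rpow hα0 c hs.1).deriv, ← tsum_mul_left, ha, hf,
      mul_left_comm, sub_sub_cancel_left]
  have hswap := integral_tsum_mul_of_nonneg (c := a) (f := f)
    (fun k ↦ integrableOn_sub_rpow_mul_rpow (hexp k) hα' ht) hf_nonneg
    (by simpa only [hterm] using (summable_mittagLeffler hα0 _).mul_left _)
  rw [caputoDeriv, hseries, hswap]
  simp only [hterm, tsum_mul_left]
  rw [← mittagLeffler]
  have := (Gamma_pos_of_pos hα').ne'
  field_simp

end MittagLeffler

/-- The Robin mode of frequency `ω`: the solution of `y'' = -ω² y` with the Robin condition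
`-y' 0 + β y 0 = 0`, normalized by `y' 0 = ω`. -/
noncomputable def robinMode (β ω x : ℝ) : ℝ :=
  sin (ω * x) + ω / β * cos (ω * x)

theorem hasDerivAt_robinMode (β ω x : ℝ) :
    HasDerivAt (robinMode β ω) (ω * cos (ω * x) - ω ^ 2 / β * sin (ω * x)) x := by
  have hlin : HasDerivAt (fun y ↦ ω * y) ω x := by simpa using (hasDerivAt_id x).const_mul ω
  convert! hlin.sin.add (hlin.cos.const_mul (ω / β)) using 1
  ring

theorem deriv_robinMode (β ω : ℝ) :
    deriv (robinMode β ω) = fun x ↦ ω * cos (ω * x) - ω ^ 2 / β * sin (ω * x) :=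
  funext fun x ↦ (hasDerivAt_robinMode β ω x).deriv

theorem deriv_deriv_robinMode (β ω x : ℝ) :
    deriv (deriv (robinMode β ω)) x = -ω ^ 2 * robinMode β ω x := by
  have hlin : HasDerivAt (fun y ↦ ω * y) ω x := by simpa using (hasDerivAt_id x).const_mul ω
  rw [deriv_robinMode]
  refine ((hlin.cos.const_mul ω).sub (hlin.sin.const_mul (ω ^ 2 / β))).deriv.trans ?_
  rw [robinMode]
  ring

theorem neg_deriv_robinMode_zero_add {β : ℝ} (hβ : β ≠ 0) (ω : ℝ) :
    -deriv (robinMode β ω) 0 + β * robinMode β ω 0 = 0 := by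
  simp only [deriv_robinMode, robinMode, mul_zero, sin_zero, cos_zero]
  field_simp
  ring

theorem deriv_robinMode_one_add {β : ℝ} (hβ : β ≠ 0) (ω : ℝ) :
    deriv (robinMode β ω) 1 + β * robinMode β ω 1 =
      2 * ω * cos ω + (β - ω ^ 2 / β) * sin ω := by
  simp only [deriv_robinMode, robinMode, mul_one]
  field_simp
  ring

theorem robin_classical_solution_1d_general {α β lam : ℝ} (hα : α ∈ Ioo 0 1) (hβ : β ≠ 0)
    (hlam : 0 ≤ lam) (hroot : 2 * √lam * cos √lam + (β - lam / β) * sin √lam = 0)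
    {ψ : ℝ → ℝ} (hψ : ∀ x, ψ x = sin (√lam * x) + √lam / β * cos (√lam * x))
    {u : ℝ → ℝ → ℝ} (hu : ∀ x t, u x t = ψ x * mittagLeffler α (-lam * t ^ α)) :
    (∀ x t, 0 < t → caputoDeriv α (u x) t = deriv (deriv fun y ↦ u y t) x) ∧
    (∀ t, 0 ≤ t → -deriv (fun y ↦ u y t) 0 + β * u 0 t = 0 ∧
      deriv (fun y ↦ u y t) 1 + β * u 1 t = 0) ∧
    ∀ x, u x 0 = ψ x := by
  obtain rfl : ψ = robinMode β √lam := funext hψ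
  obtain rfl : u = fun x t ↦ robinMode β √lam x * mittagLeffler α (-lam * t ^ α) :=
    funext₂ hu
  have hsq : √lam ^ 2 = lam := sq_sqrt hlam
  simp only [deriv_mul_const_field']
  refine ⟨fun x t ht ↦ ?_, fun t _ ↦ ⟨?_, ?_⟩, fun x ↦ ?_⟩
  · rw [caputoDeriv_const_mul, caputoDeriv_mittagLeffler_mul_rpow hα _ ht,
      deriv_deriv_robinMode, hsq]
    ring
  · linear_combination mittagLeffler α (-lam * t ^ α) * neg_deriv_robinMode_zero_add hβ √lam
  · have hone := deriv_robinMode_one_add hβ √lam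
    rw [hsq, hroot] at hone
    linear_combination mittagLeffler α (-lam * t ^ α) * hone
  · rw [zero_rpow hα.1.ne', mul_zero, mittagLeffler_zero, mul_one]

theorem robin_classical_solution_1d (α β lam : ℝ) (hα : α ∈ Set.Ioo (0:ℝ) 1)
    (hβ : 0 < β) (hlam : 0 < lam)
    (hroot : 2 * Real.sqrt lam * Real.cos (Real.sqrt lam) +
      (β - lam / β) * Real.sin (Real.sqrt lam) = 0)
    (ψ : ℝ → ℝ)
    (hψ : ∀ x, ψ x = Real.sin (Real.sqrt lam * x) +
      (Real.sqrt lam / β) * Real.cos (Real.sqrt lam * x))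
    (u : ℝ → ℝ → ℝ)
    (hu : ∀ x t : ℝ, u x t = ψ x * mittagLeffler α (-lam * t ^ α)) :
    (∀ x ∈ Set.Icc (0:ℝ) 1, ∀ t : ℝ, 0 < t →
      (1 / Real.Gamma (1 - α)) *
        ∫ s in (0:ℝ)..t, (t - s) ^ (-α) * deriv (fun s' => u x s') s =
      deriv (deriv (fun y => u y t)) x) ∧
    (∀ t : ℝ, 0 < t →
      -deriv (fun y => u y t) 0 + β * u 0 t = 0 ∧
      deriv (fun y => u y t) 1 + β * u 1 t = 0) ∧
    (∀ x ∈ Set.Icc (0:ℝ) 1, u x 0 = ψ x) := by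
  obtain ⟨hpde, hbdry, hinit⟩ := robin_classical_solution_1d_general hα hβ.ne' hlam.le hroot hψ hu
  exact ⟨fun x _ t ht ↦ hpde x t ht, fun t ht ↦ hbdry t ht.le, fun x _ ↦ hinit x⟩
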